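/- For k ≥ 2 and 2p ≥ 2, ∫_{Δ_k^{2p}} G(𝟙_{[t¹₁,t¹₂]}, …, 𝟙_{[t^{2p}_{k−1},t^{2p}_k]}, 𝟙_{[0,1]})^{−1/2} dt⃗ < ∞, where the Gram determinant is taken in L²([0,1]) of all 2p(k−1) interval indicators together with 𝟙_{[0,1]}, and Δ_k^{2p} is the 2p-fold product of the simplex Δ_k. -/

import Mathlib

open MeasureTheory
open scoped RealInnerProductSpace

noncomputable abbrev L2unit : Type :=
  Lp ℝ 2 (volume.restrict (Set.Icc (0 : ℝ) 1))

/-- The indicator `𝟙_{[s,t]}` as an element of `L²([0,1])`. -/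
noncomputable def ind (s t : ℝ) : L2unit :=
  indicatorConstLp 2 (measurableSet_Icc : MeasurableSet (Set.Icc s t))
    (by
      rw [Measure.restrict_apply measurableSet_Icc]
      exact ((measure_mono Set.inter_subset_right).trans_lt measure_Icc_lt_top).ne)
    (1 : ℝ)

/-! The Gram determinant is bounded below by inserting the points `tⁱⱼ` one at a time into the
partition of `[0,1]`. When `x` is inserted at distance `d` from the nearest earlier node, the
Haar-type function `𝟙_{[x-d,x]} - 𝟙_{[x,x+d]}` is orthogonal to `𝟙_{[0,1]}` and to all indicators of
intervals with earlier endpoints, whereas its inner product with the interval ending at `x` is `d`.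
Hence the component of that interval orthogonal to its predecessors has squared norm at least
`d² / (2d) = d / 2`, and the Gram determinant, the product of the squared norms of these components,
is at least `∏ d / 2`. For `0 ≤ r < 1` the integral of `∏ d ^ (-r)` is finite: integrate the latest
point first; each single integral of `dist(x, A) ^ (-r)` over `[0,1]`, with `A` the finite set of
earlier nodes, is bounded in terms of the cardinality of `A` only.
-/

open scoped ENNReal

section GramDeterminant

open InnerProductSpace Matrix

theorem gram_sum_smul {𝕜 E κ ι : Type*} [RCLike 𝕜] [SeminormedAddCommGroup E]
    [InnerProductSpace 𝕜 E] [Fintype κ] (g : κ → E) (U : Matrix κ ι 𝕜) :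
    gram 𝕜 (fun i => ∑ k, U k i • g k) = Uᴴ * gram 𝕜 g * U := by
  ext i j
  rw [gram_apply, ← star_dotProduct_gram_mulVec, Matrix.mul_assoc]
  rfl

section GramSchmidt

variable {𝕜 E κ : Type*} [RCLike 𝕜] [NormedAddCommGroup E] [InnerProductSpace 𝕜 E]
  [LinearOrder κ] [LocallyFiniteOrderBot κ]

theorem gram_gramSchmidt [WellFoundedLT κ] (v : κ → E) :
    gram 𝕜 (gramSchmidt 𝕜 v) = diagonal fun k => (‖gramSchmidt 𝕜 v k‖ : 𝕜) ^ 2 := by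
  ext i j
  rcases eq_or_ne i j with rfl | hij
  · simp [inner_self_eq_norm_sq_to_K]
  · rw [gram_apply, diagonal_apply_ne _ hij, gramSchmidt_orthogonal 𝕜 v hij]

theorem exists_isUpperTriangular_eq_sum_smul_gramSchmidt [Fintype κ] (v : κ → E) :
    ∃ U : Matrix κ κ 𝕜, U.IsUpperTriangular ∧ (∀ i, U i i = 1) ∧
      v = fun i => ∑ k, U k i • gramSchmidt 𝕜 v k := by
  let c : κ → κ → 𝕜 := fun k i => inner 𝕜 (gramSchmidt 𝕜 v k) (v i) / (‖gramSchmidt 𝕜 v k‖ : 𝕜) ^ 2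
  let U : Matrix κ κ 𝕜 := of fun k i => (if k = i then 1 else 0) + if k < i then c k i else 0
  refine ⟨U, fun i j hij => ?_, fun i => by simp [U], funext fun i => ?_⟩
  · have hji : j < i := hij
    simp [U, hji.not_gt, hji.ne']
  · simp only [U, of_apply, add_smul, ite_smul, one_smul, zero_smul, Finset.sum_add_distrib,
      Finset.sum_ite_eq', Finset.mem_univ, if_true, ← Finset.sum_filter, Finset.filter_gt_eq_Iio]
    exact gramSchmidt_def'' 𝕜 v i

theorem det_gram_eq_prod_norm_gramSchmidt_sq [Fintype κ] (v : κ → E) :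
    (gram 𝕜 v).det = ∏ k, (‖gramSchmidt 𝕜 v k‖ : 𝕜) ^ 2 := by
  obtain ⟨U, hU, hUdiag, hv⟩ := exists_isUpperTriangular_eq_sum_smul_gramSchmidt (𝕜 := 𝕜) v
  have hdet : U.det = 1 := by simp [det_of_isUpperTriangular hU, hUdiag]
  calc (gram 𝕜 v).det = (Uᴴ * gram 𝕜 (gramSchmidt 𝕜 v) * U).det := by
        conv_lhs => rw [hv, gram_sum_smul]
    _ = ∏ k, (‖gramSchmidt 𝕜 v k‖ : 𝕜) ^ 2 := by
        rw [gram_gramSchmidt, det_mul, det_mul, det_conjTranspose, hdet, det_diagonal, star_one,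
          one_mul, mul_one]

theorem inner_gramSchmidt_eq [WellFoundedLT κ] {v : κ → E} {k : κ} {w : E}
    (h : ∀ j < k, inner 𝕜 (v j) w = 0) : inner 𝕜 (gramSchmidt 𝕜 v k) w = inner 𝕜 (v k) w := by
  have hg : ∀ j < k, inner 𝕜 (gramSchmidt 𝕜 v j) w = 0 := by
    intro j hj
    have hspan : Submodule.span 𝕜 (v '' Set.Iic j) ≤ (𝕜 ∙ w)ᗮ := by
      rw [Submodule.span_le]
      rintro _ ⟨i, hi, rfl⟩
      exact Submodule.mem_orthogonal_singleton_iff_inner_left.2 (h i (hi.trans_lt hj))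
    exact Submodule.mem_orthogonal_singleton_iff_inner_left.1
      (hspan (gramSchmidt_mem_span 𝕜 v le_rfl))
  conv_rhs => rw [gramSchmidt_def'' 𝕜 v k]
  rw [inner_add_left, sum_inner, Finset.sum_eq_zero, add_zero]
  intro j hj
  rw [inner_smul_left, hg j (Finset.mem_Iio.1 hj), mul_zero]

end GramSchmidt

theorem prod_inner_sq_le_det_gram_mul_prod_norm_sq {E κ α : Type*} [NormedAddCommGroup E]
    [InnerProductSpace ℝ E] [Fintype κ] [DecidableEq κ] [LinearOrder α] {rank : κ → α}
    (hrank : Function.Injective rank) {v φ : κ → E}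
    (h : ∀ j k, rank j < rank k → ⟪v j, φ k⟫ = 0) :
    ∏ k, ⟪v k, φ k⟫ ^ 2 ≤ (gram ℝ v).det * ∏ k, ‖φ k‖ ^ 2 := by
  let : LinearOrder κ := LinearOrder.lift' rank hrank
  let : LocallyFiniteOrderBot κ := .ofIic κ (fun a => {x | x ≤ a}) (by simp)
  have hdet : (gram ℝ v).det = ∏ k, ‖gramSchmidt ℝ v k‖ ^ 2 := by
    convert det_gram_eq_prod_norm_gramSchmidt_sq (𝕜 := ℝ) v <;> rfl
  rw [hdet, ← Finset.prod_mul_distrib]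
  refine Finset.prod_le_prod (fun k _ => sq_nonneg _) fun k _ => ?_
  rw [← inner_gramSchmidt_eq fun j hj => h j k hj, ← sq_abs, ← mul_pow]
  gcongr
  exact abs_real_inner_le_norm _ _

end GramDeterminant

section SingularIntegrals

open Module Metric

variable {E : Type*} [NormedAddCommGroup E] [NormedSpace ℝ E] [FiniteDimensional ℝ E]
  [MeasurableSpace E] [BorelSpace E] {r : ℝ}

theorem setLIntegral_eball_enorm_rpow_neg_ne_top (μ : Measure E) [μ.IsAddHaarMeasure]
    (hr0 : 0 ≤ r) (hr : r < finrank ℝ E) :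
    ∫⁻ x in eball (0 : E) 1, ‖x‖ₑ ^ (-r) ∂μ ≠ ∞ := by
  have hd : 1 ≤ finrank ℝ E := by exact_mod_cast hr0.trans_lt hr
  have : Nontrivial E := Module.nontrivial_of_finrank_pos (R := ℝ) hd
  have hint : IntegrableOn (fun x : E => ‖x‖ ^ (-r)) (ball 0 1) μ :=
    integrableOn_ball_of_norm_le_rpow (C := 1) hd hr
      (.of_forall fun x => by rw [Real.norm_of_nonneg (by positivity), one_mul])
      (measurable_norm.pow_const _).aestronglyMeasurable
  have hae : ∀ᵐ x ∂μ.restrict (ball 0 1), ‖x‖ₑ ^ (-r) = ‖‖x‖ ^ (-r)‖ₑ := by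
    filter_upwards [ae_restrict_of_ae ((Set.countable_singleton (0 : E)).ae_notMem μ)] with x hx
    rw [Real.enorm_of_nonneg (by positivity), ← ofReal_norm,
      ENNReal.ofReal_rpow_of_pos (norm_pos_iff.2 hx)]
  have heball : eball (0 : E) 1 = ball 0 1 := by simpa using eball_ofReal (x := (0 : E)) (ε := 1)
  rw [heball, lintegral_congr_ae hae]
  exact hint.2.ne

theorem exists_setLIntegral_edist_rpow_neg_le (μ : Measure E) [μ.IsAddHaarMeasure]
    (hr0 : 0 ≤ r) (hr : r < finrank ℝ E) {S : Set E} (hS : μ S ≠ ∞) :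
    ∃ C ≠ ∞, ∀ a, ∫⁻ x in S, edist x a ^ (-r) ∂μ ≤ C := by
  refine ⟨μ S + ∫⁻ u in eball (0 : E) 1, ‖u‖ₑ ^ (-r) ∂μ,
    ENNReal.add_ne_top.2 ⟨hS, setLIntegral_eball_enorm_rpow_neg_ne_top μ hr0 hr⟩, fun a => ?_⟩
  let F : E → ℝ≥0∞ := (eball (0 : E) 1).indicator fun u => ‖u‖ₑ ^ (-r)
  have hle : ∀ x, edist x a ^ (-r) ≤ 1 + F (x - a) := by
    intro x
    rw [edist_eq_enorm_sub]
    by_cases h : x - a ∈ eball (0 : E) 1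
    · simp only [F, Set.indicator_of_mem h, le_add_self]
    · have h1 : 1 ≤ ‖x - a‖ₑ := by simpa using h
      rw [ENNReal.rpow_neg]
      exact le_add_right (ENNReal.inv_le_one.2
        (by simpa only [ENNReal.one_rpow] using ENNReal.rpow_le_rpow h1 hr0))
  calc ∫⁻ x in S, edist x a ^ (-r) ∂μ ≤ ∫⁻ x in S, (1 + F (x - a)) ∂μ := lintegral_mono hle
    _ = μ S + ∫⁻ x in S, F (x - a) ∂μ := by
        rw [lintegral_add_left measurable_const, setLIntegral_const, one_mul]
    _ ≤ μ S + ∫⁻ x, F (x - a) ∂μ := by gcongr; exact Measure.restrict_le_self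
    _ = μ S + ∫⁻ u in eball (0 : E) 1, ‖u‖ₑ ^ (-r) ∂μ := by
        rw [lintegral_sub_right_eq_self F a, lintegral_indicator measurableSet_eball]

theorem exists_setLIntegral_infEDist_rpow_neg_le (μ : Measure E) [μ.IsAddHaarMeasure]
    (hr0 : 0 ≤ r) (hr : r < finrank ℝ E) {S : Set E} (hS : μ S ≠ ∞) :
    ∃ C ≠ ∞, ∀ A : Set E, A.Finite → A.Nonempty →
      ∫⁻ x in S, infEDist x A ^ (-r) ∂μ ≤ A.ncard * C := by
  obtain ⟨C, hC, hle⟩ := exists_setLIntegral_edist_rpow_neg_le μ hr0 hr hS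
  refine ⟨C, hC, fun A hA hAne => ?_⟩
  have hsum : ∀ x, infEDist x A ^ (-r) ≤ ∑ a ∈ hA.toFinset, edist x a ^ (-r) := by
    intro x
    obtain ⟨a, ha, hxa⟩ := hA.isCompact.exists_infEDist_eq_edist hAne x
    rw [hxa]
    exact Finset.single_le_sum (f := fun a => edist x a ^ (-r)) (fun _ _ => zero_le)
      (hA.mem_toFinset.2 ha)
  calc ∫⁻ x in S, infEDist x A ^ (-r) ∂μ
      ≤ ∫⁻ x in S, ∑ a ∈ hA.toFinset, edist x a ^ (-r) ∂μ := lintegral_mono hsum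
    _ = ∑ a ∈ hA.toFinset, ∫⁻ x in S, edist x a ^ (-r) ∂μ :=
        lintegral_finsetSum _ fun a _ => by fun_prop
    _ ≤ ∑ _a ∈ hA.toFinset, C := Finset.sum_le_sum fun a _ => hle a
    _ = A.ncard * C := by
        rw [Finset.sum_const, nsmul_eq_mul, Set.ncard_eq_toFinset_card A hA]

end SingularIntegrals

section ProductMeasure

theorem lintegral_pi_prod_le {ι : Type*} {α : ι → Type*} [Fintype ι] [LinearOrder ι]
    [∀ i, MeasurableSpace (α i)] {μ : ∀ i, Measure (α i)} [∀ i, SigmaFinite (μ i)]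
    {f : ι → (∀ i, α i) → ℝ≥0∞} {C : ι → ℝ≥0∞} (hf : ∀ k, Measurable (f k))
    (hdep : ∀ k l, k < l → ∀ x y, f k (Function.update x l y) = f k x)
    (hC : ∀ k x, ∫⁻ y, f k (Function.update x k y) ∂μ k ≤ C k) :
    ∫⁻ x, ∏ k, f k x ∂Measure.pi μ ≤ ∏ k, C k := by
  have hmarg : ∀ (s : Finset ι) (c : ℝ≥0∞) (x : ∀ i, α i),
      (∫⋯∫⁻_s, fun x => c * ∏ k ∈ s, f k x ∂μ) x ≤ c * ∏ k ∈ s, C k := by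
    intro s
    induction s using Finset.induction_on_max with
    | empty => simp
    | insert a s ha ih =>
      intro c x
      have has : a ∉ s := fun h => (ha a h).false
      have hm : Measurable fun x => c * ∏ k ∈ insert a s, f k x := by fun_prop
      have hfa : ∀ x, Measurable fun y => f a (Function.update x a y) := fun x => by fun_prop
      rw [lmarginal_insert' _ hm has, Finset.prod_insert has, ← mul_assoc]
      refine (lmarginal_mono (fun x => ?_) x).trans (ih (c * C a) x)
      calc ∫⁻ y, c * ∏ k ∈ insert a s, f k (Function.update x a y) ∂μ a
          = ∫⁻ y, c * (f a (Function.update x a y) * ∏ k ∈ s, f k x) ∂μ a := by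
            refine lintegral_congr fun y => ?_
            rw [Finset.prod_insert has,
              Finset.prod_congr rfl fun k hk => hdep k a (ha k hk) x y]
        _ = c * ((∫⁻ y, f a (Function.update x a y) ∂μ a) * ∏ k ∈ s, f k x) := by
            rw [lintegral_const_mul _ ((hfa x).mul_const _), lintegral_mul_const _ (hfa x)]
        _ ≤ c * C a * ∏ k ∈ s, f k x := by
            rw [mul_assoc]
            gcongr
            exact hC a x
  rcases isEmpty_or_nonempty (∀ i, α i) with h | ⟨⟨x⟩⟩
  · simp [lintegral_of_isEmpty]
  · simpa using hmarg Finset.univ 1 x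

theorem measurePreserving_uncurry {ι κ α : Type*} [Fintype ι] [Fintype κ] [MeasurableSpace α]
    (μ : ι → κ → Measure α) [∀ i j, SigmaFinite (μ i j)] :
    MeasurePreserving (MeasurableEquiv.curry ι κ α).symm
      (Measure.pi fun i => Measure.pi (μ i)) (Measure.pi fun p : ι × κ => μ p.1 p.2) := by
  refine ⟨MeasurableEquiv.measurable _, (Measure.pi_eq fun s _ => ?_).symm⟩
  have hpre : (MeasurableEquiv.curry ι κ α).symm ⁻¹' Set.univ.pi s =
      Set.univ.pi fun i => Set.univ.pi fun j => s (i, j) := by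
    ext t
    simp [Set.mem_pi]
  rw [MeasurableEquiv.map_apply, hpre]
  simp only [Measure.pi_pi, Fintype.prod_prod_type]

end ProductMeasure

section PriorGap

variable {κ : Type*} [Preorder κ]

/-- The distance from `s k` to the endpoints of `[0,1]` and to the points of the family `s` that
precede it, i.e. the distance to the nearest node at the moment `s k` is inserted into the
partition of `[0,1]` by the preceding points. -/
noncomputable def priorGap (s : κ → ℝ) (k : κ) : ℝ :=
  Metric.infDist (s k) ({0, 1} ∪ s '' Set.Iio k)

theorem priorGap_nonneg (s : κ → ℝ) (k : κ) : 0 ≤ priorGap s k := Metric.infDist_nonneg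

theorem le_sub_priorGap_or_add_priorGap_le (s : κ → ℝ) {j k : κ} (h : j < k) :
    s j ≤ s k - priorGap s k ∨ s k + priorGap s k ≤ s j := by
  have hdist : priorGap s k ≤ |s k - s j| := Metric.infDist_le_dist_of_mem (Or.inr ⟨j, h, rfl⟩)
  grind

theorem priorGap_le_of_mem_Icc {s : κ → ℝ} {k : κ} (h : s k ∈ Set.Icc (0 : ℝ) 1) :
    priorGap s k ≤ s k ∧ priorGap s k ≤ 1 - s k := by
  constructor
  · have : priorGap s k ≤ dist (s k) 0 := Metric.infDist_le_dist_of_mem (by simp)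
    rwa [Real.dist_eq, sub_zero, abs_of_nonneg h.1] at this
  · have : priorGap s k ≤ dist (s k) 1 := Metric.infDist_le_dist_of_mem (by simp)
    rwa [dist_comm, Real.dist_eq, abs_of_nonneg (sub_nonneg.2 h.2)] at this

theorem ofReal_priorGap (s : κ → ℝ) (k : κ) :
    ENNReal.ofReal (priorGap s k) = Metric.infEDist (s k) ({0, 1} ∪ s '' Set.Iio k) :=
  ENNReal.ofReal_toReal (Metric.infEDist_ne_top (by simp))

theorem measurable_priorGap [Countable κ] (k : κ) : Measurable fun s : κ → ℝ => priorGap s k := by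
  refine Measurable.ennreal_toReal ?_
  simp_rw [Metric.infEDist_union]
  refine Measurable.min (by fun_prop) ?_
  simp only [Metric.infEDist, iInf_image]
  exact .biInf _ (Set.to_countable _) fun j _ => by fun_prop

section Update

variable [DecidableEq κ] (s : κ → ℝ)

theorem priorGap_update_of_lt {k l : κ} (h : k < l) (x : ℝ) :
    priorGap (Function.update s l x) k = priorGap s k := by
  have himage : Function.update s l x '' Set.Iio k = s '' Set.Iio k :=
    Set.image_congr fun j hj => Function.update_of_ne (hj.trans h).ne _ _
  rw [priorGap, priorGap, himage, Function.update_of_ne h.ne]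

theorem ofReal_priorGap_update_self (k : κ) (x : ℝ) :
    ENNReal.ofReal (priorGap (Function.update s k x) k) =
      Metric.infEDist x ({0, 1} ∪ s '' Set.Iio k) := by
  have himage : Function.update s k x '' Set.Iio k = s '' Set.Iio k :=
    Set.image_congr fun j hj => Function.update_of_ne (ne_of_lt hj) _ _
  rw [ofReal_priorGap, himage, Function.update_self]

end Update

end PriorGap

theorem lintegral_prod_priorGap_rpow_neg_lt_top {κ : Type*} [Fintype κ] [LinearOrder κ] {r : ℝ}
    (hr0 : 0 ≤ r) (hr1 : r < 1) :
    ∫⁻ s, ∏ k : κ, ENNReal.ofReal (priorGap s k) ^ (-r)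
      ∂Measure.pi (fun _ => volume.restrict (Set.Icc (0 : ℝ) 1)) < ∞ := by
  obtain ⟨C, hC, hle⟩ := exists_setLIntegral_infEDist_rpow_neg_le (S := Set.Icc (0 : ℝ) 1) volume
    hr0 (by simpa using hr1) measure_Icc_lt_top.ne
  let A (s : κ → ℝ) (k : κ) : Set ℝ := {0, 1} ∪ s '' Set.Iio k
  have hcard : ∀ s k, (A s k).ncard ≤ 2 + Nat.card κ := fun s k =>
    (Set.ncard_union_le _ _).trans (add_le_add ((Set.ncard_insert_le _ _).trans (by simp))
      ((Set.ncard_image_le (Set.toFinite _)).trans (Set.ncard_le_card _)))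
  refine (lintegral_pi_prod_le (C := fun _ => (2 + Nat.card κ : ℕ) * C)
    (fun k => (measurable_priorGap k).ennreal_ofReal.pow_const _)
    (fun k l hkl s x => by rw [priorGap_update_of_lt s hkl]) fun k s => ?_).trans_lt
    (ENNReal.prod_lt_top fun _ _ => ENNReal.mul_lt_top (ENNReal.natCast_lt_top _) hC.lt_top)
  calc ∫⁻ x in Set.Icc 0 1, ENNReal.ofReal (priorGap (Function.update s k x) k) ^ (-r)
      = ∫⁻ x in Set.Icc 0 1, Metric.infEDist x (A s k) ^ (-r) := by
        simp only [ofReal_priorGap_update_self, A]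
    _ ≤ (A s k).ncard * C := hle _ (Set.toFinite _) ⟨0, by simp [A]⟩
    _ ≤ (2 + Nat.card κ : ℕ) * C := by gcongr; exact hcard s k

section HaarWavelet

theorem inner_ind (a b c d : ℝ) :
    ⟪ind a b, ind c d⟫ = max (min b (min d 1) - max a (max c 0)) 0 := by
  unfold ind
  rw [L2.inner_indicatorConstLp_indicatorConstLp]
  simp only [Measure.real, Measure.restrict_apply (measurableSet_Icc.inter measurableSet_Icc)]
  rw [Set.inter_assoc, Set.Icc_inter_Icc, Set.Icc_inter_Icc, Real.volume_Icc]
  simp [ENNReal.toReal_ofReal']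

theorem inner_self_ind_zero_one : ⟪ind 0 1, ind 0 1⟫ = (1 : ℝ) := by
  rw [inner_ind]
  norm_num

/-- The Haar-type function `𝟙_{[x-d,x]} - 𝟙_{[x,x+d]}` in `L²([0,1])`. -/
noncomputable def haarWavelet (x d : ℝ) : L2unit := ind (x - d) x - ind x (x + d)

variable {a b x d : ℝ}

theorem inner_ind_haarWavelet_eq_zero (hd : 0 ≤ d) (h0 : d ≤ x) (h1 : d ≤ 1 - x)
    (ha : a ≤ x - d ∨ x + d ≤ a) (hb : b ≤ x - d ∨ x + d ≤ b) :
    ⟪ind a b, haarWavelet x d⟫ = 0 := by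
  rw [haarWavelet, inner_sub_right, inner_ind, inner_ind]
  grind

theorem inner_ind_haarWavelet (hd : 0 ≤ d) (h0 : d ≤ x) (h1 : d ≤ 1 - x) (ha : a ≤ x - d) :
    ⟪ind a x, haarWavelet x d⟫ = d := by
  rw [haarWavelet, inner_sub_right, inner_ind, inner_ind]
  grind

theorem norm_haarWavelet_sq (hd : 0 ≤ d) (h0 : d ≤ x) (h1 : d ≤ 1 - x) :
    ‖haarWavelet x d‖ ^ 2 = 2 * d := by
  rw [← real_inner_self_eq_norm_sq, haarWavelet, inner_sub_right, inner_sub_left, inner_sub_left]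
  simp only [inner_ind]
  grind

end HaarWavelet

section Chains

open Matrix

variable {ι : Type*} {n : ℕ} {t : ι → Fin (n + 1) → ℝ}

/-- The power `Δₙ₊₁^ι` of the ordered simplex: families, indexed by `ι`, of chains
`0 ≤ tⁱ₀ ≤ ⋯ ≤ tⁱₙ ≤ 1`. -/
def simplexPower (ι : Type*) (n : ℕ) : Set (ι → Fin (n + 1) → ℝ) :=
  {t | ∀ i, Monotone (t i) ∧ ∀ j, t i j ∈ Set.Icc 0 1}

/-- The indicators of the intervals between consecutive points of each chain `t i`, together with
`𝟙_{[0,1]}`. -/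
noncomputable def intervalFamily (t : ι → Fin (n + 1) → ℝ) : (ι × Fin n) ⊕ Unit → L2unit :=
  Sum.elim (fun q => ind (t q.1 q.2.castSucc) (t q.1 q.2.succ)) fun _ => ind 0 1

/-- The points of all chains as one family, ordered chain by chain. -/
def chainPoints (t : ι → Fin (n + 1) → ℝ) (k : ι ×ₗ Fin (n + 1)) : ℝ := t (ofLex k).1 (ofLex k).2

/-- The index in `chainPoints` of the right endpoint of the interval `q`. -/
def rightEndpoint (q : ι × Fin n) : ι ×ₗ Fin (n + 1) := toLex (q.1, q.2.succ)

/-- The order of the members of `intervalFamily`: first `𝟙_{[0,1]}`, then the intervals in the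
order of their right endpoints. -/
def insertionRank : (ι × Fin n) ⊕ Unit → WithBot (ι ×ₗ Fin (n + 1)) :=
  Sum.elim (fun q => rightEndpoint q) fun _ => ⊥

theorem insertionRank_injective : Function.Injective (insertionRank (ι := ι) (n := n)) := by
  rintro (⟨i, j⟩ | _) (⟨i', j'⟩ | _) h <;>
    simp_all [insertionRank, rightEndpoint]

theorem isCompact_simplexPower (ι : Type*) (n : ℕ) : IsCompact (simplexPower ι n) := by
  have hpi : simplexPower ι n = Set.univ.pi fun _ =>
      {x : Fin (n + 1) → ℝ | Monotone x} ∩ Set.univ.pi fun _ => Set.Icc 0 1 := by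
    ext t
    simp only [simplexPower, Set.mem_univ_pi, Set.mem_inter_iff, Set.mem_ofPred_eq]
  rw [hpi]
  exact isCompact_univ_pi fun _ => (isCompact_univ_pi fun _ => isCompact_Icc).inter_left
    isClosed_monotone

section DualFamily

variable [LinearOrder ι]

/-- The Haar-type functions centred at the right endpoints of the intervals, each as wide as
possible within one interval of the partition by the preceding points, together with `𝟙_{[0,1]}`.
They are triangularly dual to `intervalFamily` in the order of `insertionRank`. -/
noncomputable def haarFamily (t : ι → Fin (n + 1) → ℝ) : (ι × Fin n) ⊕ Unit → L2unit :=
  Sum.elim (fun q => haarWavelet (t q.1 q.2.succ) (priorGap (chainPoints t) (rightEndpoint q)))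
    fun _ => ind 0 1

theorem priorGap_rightEndpoint_le (ht : t ∈ simplexPower ι n) (q : ι × Fin n) :
    priorGap (chainPoints t) (rightEndpoint q) ≤ t q.1 q.2.succ ∧
      priorGap (chainPoints t) (rightEndpoint q) ≤ 1 - t q.1 q.2.succ :=
  priorGap_le_of_mem_Icc (s := chainPoints t) (k := rightEndpoint q) ((ht q.1).2 q.2.succ)

theorem toLex_castSucc_lt_rightEndpoint (q : ι × Fin n) :
    toLex (q.1, q.2.castSucc) < rightEndpoint q :=
  Prod.Lex.toLex_lt_toLex.2 (Or.inr ⟨rfl, Fin.castSucc_lt_succ⟩)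

theorem inner_intervalFamily_haarFamily_eq_zero (ht : t ∈ simplexPower ι n)
    {k l : (ι × Fin n) ⊕ Unit} (h : insertionRank k < insertionRank l) :
    ⟪intervalFamily t k, haarFamily t l⟫ = 0 := by
  rcases l with q | _
  swap
  · exact absurd h not_lt_bot
  obtain ⟨h0, h1⟩ := priorGap_rightEndpoint_le ht q
  have hd := priorGap_nonneg (chainPoints t) (rightEndpoint q)
  rcases k with q' | _
  · have hlt : rightEndpoint q' < rightEndpoint q := WithBot.coe_lt_coe.1 h
    exact inner_ind_haarWavelet_eq_zero hd h0 h1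
      (le_sub_priorGap_or_add_priorGap_le (chainPoints t)
        ((toLex_castSucc_lt_rightEndpoint q').trans hlt))
      (le_sub_priorGap_or_add_priorGap_le (chainPoints t) hlt)
  · exact inner_ind_haarWavelet_eq_zero hd h0 h1 (Or.inl (sub_nonneg.2 h0))
      (Or.inr (le_sub_iff_add_le'.1 h1))

theorem inner_intervalFamily_haarFamily_inl (ht : t ∈ simplexPower ι n) (q : ι × Fin n) :
    ⟪intervalFamily t (Sum.inl q), haarFamily t (Sum.inl q)⟫ =
      priorGap (chainPoints t) (rightEndpoint q) := by
  obtain ⟨h0, h1⟩ := priorGap_rightEndpoint_le ht q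
  have hd := priorGap_nonneg (chainPoints t) (rightEndpoint q)
  have hmono : t q.1 q.2.castSucc ≤ t q.1 q.2.succ := (ht q.1).1 Fin.castSucc_lt_succ.le
  have hsep : t q.1 q.2.castSucc ≤ t q.1 q.2.succ - priorGap (chainPoints t) (rightEndpoint q) ∨
      t q.1 q.2.succ + priorGap (chainPoints t) (rightEndpoint q) ≤ t q.1 q.2.castSucc :=
    le_sub_priorGap_or_add_priorGap_le (chainPoints t) (toLex_castSucc_lt_rightEndpoint q)
  exact inner_ind_haarWavelet hd h0 h1 (by grind)

theorem prod_priorGap_sq_le_det_gram_mul [Fintype ι] (ht : t ∈ simplexPower ι n) :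
    ∏ q : ι × Fin n, priorGap (chainPoints t) (rightEndpoint q) ^ 2 ≤
      (gram ℝ (intervalFamily t)).det *
        ∏ q : ι × Fin n, 2 * priorGap (chainPoints t) (rightEndpoint q) := by
  have hnorm : ∀ q, ‖haarFamily t (Sum.inl q)‖ ^ 2 =
      2 * priorGap (chainPoints t) (rightEndpoint q) := fun q =>
    norm_haarWavelet_sq (priorGap_nonneg _ _) (priorGap_rightEndpoint_le ht q).1
      (priorGap_rightEndpoint_le ht q).2
  have hunit : ⟪intervalFamily t (Sum.inr ()), haarFamily t (Sum.inr ())⟫ = 1 :=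
    inner_self_ind_zero_one
  have hunit_norm : ‖haarFamily t (Sum.inr ())‖ ^ 2 = 1 :=
    (real_inner_self_eq_norm_sq _).symm.trans inner_self_ind_zero_one
  have h := prod_inner_sq_le_det_gram_mul_prod_norm_sq insertionRank_injective
    fun _ _ => inner_intervalFamily_haarFamily_eq_zero ht
  simpa only [Fintype.prod_sum_type, inner_intervalFamily_haarFamily_inl ht, hnorm,
    Finset.univ_unique, Finset.prod_singleton, PUnit.default_eq_unit, hunit, hunit_norm, one_pow,
    mul_one] using h

theorem prod_priorGap_rightEndpoint_div_two_le_det_gram [Fintype ι] (ht : t ∈ simplexPower ι n) :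
    ∏ q : ι × Fin n, priorGap (chainPoints t) (rightEndpoint q) / 2 ≤
      (gram ℝ (intervalFamily t)).det := by
  let d (q : ι × Fin n) : ℝ := priorGap (chainPoints t) (rightEndpoint q)
  have hd : ∀ q, 0 ≤ d q := fun q => priorGap_nonneg _ _
  by_cases hpos : ∀ q, 0 < d q
  · have hprod : 0 < ∏ q, 2 * d q := Finset.prod_pos fun q _ => mul_pos two_pos (hpos q)
    refine le_of_mul_le_mul_right ?_ hprod
    calc (∏ q, d q / 2) * ∏ q, 2 * d q = ∏ q, d q ^ 2 := by
          rw [← Finset.prod_mul_distrib]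
          exact Finset.prod_congr rfl fun q _ => by ring
      _ ≤ (gram ℝ (intervalFamily t)).det * ∏ q, 2 * d q := prod_priorGap_sq_le_det_gram_mul ht
  · obtain ⟨q, hq⟩ := not_forall.1 hpos
    rw [Finset.prod_eq_zero (Finset.mem_univ q)]
    · exact (posSemidef_gram ℝ _).det_nonneg
    · exact div_eq_zero_iff.2 (Or.inl (le_antisymm (not_lt.1 hq) (hd q)))

theorem prod_priorGap_div_two_le_det_gram [Fintype ι] (ht : t ∈ simplexPower ι n) :
    ∏ k, priorGap (chainPoints t) k / 2 ≤ (gram ℝ (intervalFamily t)).det := by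
  have hnonneg : ∀ k, 0 ≤ priorGap (chainPoints t) k / 2 := fun k =>
    div_nonneg (priorGap_nonneg _ _) two_pos.le
  have hle_one : ∀ k, priorGap (chainPoints t) k / 2 ≤ 1 := fun k => by
    have := priorGap_le_of_mem_Icc (s := chainPoints t) (k := k) ((ht _).2 _)
    linarith
  calc ∏ k, priorGap (chainPoints t) k / 2
      = ∏ i : ι, ∏ j : Fin (n + 1), priorGap (chainPoints t) (toLex (i, j)) / 2 :=
        Fintype.prod_prod_type _
    _ ≤ ∏ i : ι, ∏ j : Fin n, priorGap (chainPoints t) (rightEndpoint (i, j)) / 2 := by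
        refine Finset.prod_le_prod (fun i _ => Finset.prod_nonneg fun j _ => hnonneg _)
          fun i _ => ?_
        rw [Fin.prod_univ_succ]
        exact mul_le_of_le_one_left (Finset.prod_nonneg fun j _ => hnonneg _) (hle_one _)
    _ = ∏ q : ι × Fin n, priorGap (chainPoints t) (rightEndpoint q) / 2 :=
        (Fintype.prod_prod_type' fun i j =>
          priorGap (chainPoints t) (rightEndpoint (i, j)) / 2).symm
    _ ≤ _ := prod_priorGap_rightEndpoint_div_two_le_det_gram ht

end DualFamily

end Chains

section Integrability

open Matrix

variable {ι : Type*} [Fintype ι] {n : ℕ} {r : ℝ}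

theorem continuous_det_gram_intervalFamily [DecidableEq ι] :
    Continuous fun t : ι → Fin (n + 1) → ℝ => (gram ℝ (intervalFamily t)).det := by
  refine Continuous.matrix_det (continuous_matrix fun k l => ?_)
  rcases k with k | _ <;> rcases l with l | _ <;>
    simp only [gram_apply, intervalFamily, Sum.elim_inl, Sum.elim_inr, inner_ind] <;> fun_prop

-- At `x = 0 < r` the real power is the junk value `0`, while the extended one is `∞`.
theorem enorm_rpow_neg_le {x : ℝ} (hx : 0 ≤ x) (hr : 0 ≤ r) :
    ‖x ^ (-r)‖ₑ ≤ ENNReal.ofReal x ^ (-r) := by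
  rw [Real.enorm_of_nonneg (Real.rpow_nonneg hx _)]
  rcases hx.eq_or_lt with rfl | hx
  · rcases hr.eq_or_lt with rfl | hr
    · simp
    · simp [ENNReal.zero_rpow_of_neg (neg_lt_zero.2 hr)]
  · rw [ENNReal.ofReal_rpow_of_pos hx]

theorem lintegral_prod_priorGap_chainPoints_rpow_neg_lt_top [LinearOrder ι] (hr0 : 0 ≤ r)
    (hr1 : r < 1) :
    ∫⁻ t in simplexPower ι n, ∏ k, ENNReal.ofReal (priorGap (chainPoints t) k) ^ (-r) < ∞ := by
  let ν : Measure ℝ := volume.restrict (Set.Icc 0 1)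
  have hcube : simplexPower ι n ⊆ Set.univ.pi fun _ => Set.univ.pi fun _ => Set.Icc 0 1 :=
    fun t ht i _ j _ => (ht i).2 j
  have hrestrict : (volume : Measure (ι → Fin (n + 1) → ℝ)).restrict
      (Set.univ.pi fun _ => Set.univ.pi fun _ => Set.Icc 0 1) =
      Measure.pi fun _ => Measure.pi fun _ => ν := by
    simp only [ν, volume_pi, Measure.restrict_pi_pi]
  calc ∫⁻ t in simplexPower ι n, ∏ k, ENNReal.ofReal (priorGap (chainPoints t) k) ^ (-r)
      ≤ ∫⁻ t, ∏ k, ENNReal.ofReal (priorGap (chainPoints t) k) ^ (-r)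
          ∂Measure.pi fun _ : ι => Measure.pi fun _ : Fin (n + 1) => ν := by
        rw [← hrestrict]
        exact lintegral_mono_set hcube
    _ = ∫⁻ s, ∏ k : ι ×ₗ Fin (n + 1), ENNReal.ofReal (priorGap s k) ^ (-r)
          ∂Measure.pi fun _ => ν :=
        (measurePreserving_uncurry fun (_ : ι) (_ : Fin (n + 1)) => ν).lintegral_comp_emb
          (MeasurableEquiv.measurableEmbedding _)
          fun s : ι ×ₗ Fin (n + 1) → ℝ => ∏ k, ENNReal.ofReal (priorGap s k) ^ (-r)
    _ < ∞ := lintegral_prod_priorGap_rpow_neg_lt_top hr0 hr1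

theorem enorm_det_gram_rpow_neg_le [LinearOrder ι] {t : ι → Fin (n + 1) → ℝ}
    (ht : t ∈ simplexPower ι n) (hr : 0 ≤ r) :
    ‖(gram ℝ (intervalFamily t)).det ^ (-r)‖ₑ ≤
      (2 ^ r) ^ Fintype.card (ι ×ₗ Fin (n + 1)) *
        ∏ k, ENNReal.ofReal (priorGap (chainPoints t) k) ^ (-r) := by
  have hgap : ∀ k, 0 ≤ priorGap (chainPoints t) k / 2 := fun k =>
    div_nonneg (priorGap_nonneg _ _) two_pos.le
  calc ‖(gram ℝ (intervalFamily t)).det ^ (-r)‖ₑ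
      ≤ ENNReal.ofReal (gram ℝ (intervalFamily t)).det ^ (-r) :=
        enorm_rpow_neg_le (posSemidef_gram ℝ _).det_nonneg hr
    _ ≤ ENNReal.ofReal (∏ k, priorGap (chainPoints t) k / 2) ^ (-r) := by
        rw [ENNReal.rpow_neg, ENNReal.rpow_neg, ENNReal.inv_le_inv]
        exact ENNReal.rpow_le_rpow
          (ENNReal.ofReal_le_ofReal (prod_priorGap_div_two_le_det_gram ht)) hr
    _ = ∏ k, ENNReal.ofReal (priorGap (chainPoints t) k / 2) ^ (-r) := by
        rw [ENNReal.ofReal_prod_of_nonneg fun k _ => hgap k,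
          ENNReal.prod_rpow_of_ne_top fun k _ => ENNReal.ofReal_ne_top]
    _ = ∏ k, 2 ^ r * ENNReal.ofReal (priorGap (chainPoints t) k) ^ (-r) := by
        refine Finset.prod_congr rfl fun k _ => ?_
        rw [ENNReal.ofReal_div_of_pos two_pos, ENNReal.ofReal_ofNat, div_eq_mul_inv,
          ENNReal.mul_rpow_of_ne_top ENNReal.ofReal_ne_top (by simp), ENNReal.inv_rpow,
          ← ENNReal.rpow_neg, neg_neg, mul_comm]
    _ = _ := by rw [Finset.prod_mul_distrib, Finset.prod_const, Finset.card_univ]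

end Integrability

theorem gram_integral_finite_general (m n : ℕ) {r : ℝ} (hr : r < 1) :
    IntegrableOn
      (fun t : Fin m → Fin (n + 1) → ℝ => (Matrix.gram ℝ (intervalFamily t)).det ^ (-r))
      (simplexPower (Fin m) n) := by
  have hcont : Continuous fun t : Fin m → Fin (n + 1) → ℝ =>
      (Matrix.gram ℝ (intervalFamily t)).det := continuous_det_gram_intervalFamily
  have hcompact : IsCompact (simplexPower (Fin m) n) := isCompact_simplexPower _ _
  rcases le_total r 0 with hr0 | hr0
  · exact (hcont.rpow_const fun _ => Or.inr (neg_nonneg.2 hr0)).continuousOn.integrableOn_compact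
      hcompact
  · refine ⟨(hcont.measurable.pow_const _).aestronglyMeasurable, ?_⟩
    let c : ℝ≥0∞ := (2 ^ r) ^ Fintype.card (Fin m ×ₗ Fin (n + 1))
    have hc : c ≠ ∞ := ENNReal.pow_ne_top (ENNReal.rpow_ne_top_of_nonneg hr0 ENNReal.ofNat_ne_top)
    calc ∫⁻ t in simplexPower (Fin m) n, ‖(Matrix.gram ℝ (intervalFamily t)).det ^ (-r)‖ₑ
        ≤ ∫⁻ t in simplexPower (Fin m) n,
            c * ∏ k, ENNReal.ofReal (priorGap (chainPoints t) k) ^ (-r) :=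
          setLIntegral_mono' hcompact.measurableSet fun t ht => enorm_det_gram_rpow_neg_le ht hr0
      _ = c * ∫⁻ t in simplexPower (Fin m) n,
            ∏ k, ENNReal.ofReal (priorGap (chainPoints t) k) ^ (-r) :=
          lintegral_const_mul' _ _ hc
      _ < ∞ := ENNReal.mul_lt_top hc.lt_top
          (lintegral_prod_priorGap_chainPoints_rpow_neg_lt_top hr0 hr)

/-- For `k = n + 1 ≥ 2` and `2p ≥ 2`, the integral over `Δ_k^{2p}` of
`G(𝟙_{[t¹₁,t¹₂]},…,𝟙_{[t^{2p}_{k−1},t^{2p}_k]},𝟙_{[0,1]})^{−1/2}` is finite,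
where the Gram determinant in `L²([0,1])` is of all `2p(k−1)` interval indicators
together with `𝟙_{[0,1]}`. -/
theorem gram_integral_finite (p n : ℕ) (hp : 1 ≤ p) (hn : 1 ≤ n) :
    IntegrableOn
      (fun t : Fin (2 * p) → Fin (n + 1) → ℝ =>
        (Real.sqrt (Matrix.det (Matrix.of
          fun i j : (Fin (2 * p) × Fin n) ⊕ Unit =>
            ⟪Sum.elim (fun q : Fin (2 * p) × Fin n =>
                ind (t q.1 q.2.castSucc) (t q.1 q.2.succ)) (fun _ => ind 0 1) i,
              Sum.elim (fun q : Fin (2 * p) × Fin n =>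
                ind (t q.1 q.2.castSucc) (t q.1 q.2.succ)) (fun _ => ind 0 1) j⟫)))⁻¹)
      {t : Fin (2 * p) → Fin (n + 1) → ℝ |
        ∀ i, Monotone (t i) ∧ ∀ j, t i j ∈ Set.Icc 0 1} := by
  refine (gram_integral_finite_general (2 * p) n (r := 1 / 2) (by norm_num)).congr_fun_ae ?_
  refine .of_forall fun t => ?_
  dsimp only
  rw [Real.rpow_neg (Matrix.posSemidef_gram ℝ _).det_nonneg, ← Real.sqrt_eq_rpow]
  rfl
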